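/- arXiv:1211.2005 — 5 statements merged into one kernel-verified Lean document; each statement's English description precedes it below -/
import Mathlib

section
/- Let α₁, α₂ ∈ ℝ, β > −1 and 0 < c < 1, and let ρ : ℕ → ℝ be the generalized Hahn weight of type I, ρ(x) = (α₁)ₓ(α₂)ₓ cˣ / ((β+1)ₓ x!). Then ρ satisfies the Pearson equation Δ(φρ)(x) + ψ(x)ρ(x) = 0 for all x ∈ ℕ, where φ(x) = x(x+β) and ψ(x) = (1−c)x² + (β − cα₁ − cα₂)x − cα₁α₂. -/
/-- Forward difference operator on functions `ℕ → ℝ`: `Δf(x) = f(x+1) − f(x)`. -/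
def ddiff (f : ℕ → ℝ) (x : ℕ) : ℝ := f (x + 1) - f x

/-- Pochhammer symbol (ascending factorial): `(a)ₓ = a(a+1)⋯(a+x−1)`, `(a)₀ = 1`. -/
def poch (a : ℝ) : ℕ → ℝ
  | 0 => 1
  | n + 1 => poch a n * (a + n)

/-- The generalized Hahn weight of type I, `ρ(x) = (α₁)ₓ(α₂)ₓ cˣ/((β+1)ₓ x!)`
(with `β > −1`, `0 < c < 1`), satisfies the Pearson equation `Δ(φρ) + ψρ = 0` with
`φ(x) = x(x+β)` and `ψ(x) = (1−c)x² + (β − cα₁ − cα₂)x − cα₁α₂`. -/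
theorem generalized_hahnI_pearson (α₁ α₂ β c : ℝ) (hβ : -1 < β) (hc0 : 0 < c) (hc1 : c < 1)
    (ρ : ℕ → ℝ)
    (hρ : ∀ x : ℕ,
      ρ x = poch α₁ x * poch α₂ x * c ^ x / (poch (β + 1) x * (Nat.factorial x : ℝ))) :
    ∀ x : ℕ, ddiff (fun y : ℕ => (y : ℝ) * ((y : ℝ) + β) * ρ y) x
      + ((1 - c) * (x : ℝ) ^ 2 + (β - c * α₁ - c * α₂) * (x : ℝ) - c * α₁ * α₂) * ρ x = 0 := by
  intro x
  have hx : (0 : ℝ) ≤ (x : ℝ) := Nat.cast_nonneg x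
  have hpos : ∀ n : ℕ, 0 < poch (β + 1) n := by
    intro n
    induction n with
    | zero => simp [poch]
    | succ k ih =>
      have hk : (0 : ℝ) ≤ (k : ℝ) := Nat.cast_nonneg k
      have : 0 < β + 1 + (k : ℝ) := by linarith
      simpa [poch] using mul_pos ih this
  have h1 : poch (β + 1) x ≠ 0 := (hpos x).ne'
  have h2 : (Nat.factorial x : ℝ) ≠ 0 := by exact_mod_cast Nat.factorial_ne_zero x
  have h3 : β + 1 + (x : ℝ) ≠ 0 := by
    have : 0 < β + 1 + (x : ℝ) := by linarith
    exact this.ne'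
  have h4 : (x : ℝ) + 1 ≠ 0 := by linarith
  have key : ((x : ℝ) + 1) * ((x : ℝ) + 1 + β) * ρ (x + 1)
      = c * (α₁ + x) * (α₂ + x) * ρ x := by
    rw [hρ, hρ, Nat.factorial_succ]
    simp only [poch]
    push_cast
    field_simp
    ring
  simp only [ddiff]
  push_cast
  rw [key]
  ring
end

section
/- Let N ∈ ℕ, α₁, α₂ ∈ ℝ, and β₁, β₂ ∈ ℝ with β₁ + 1 and β₂ + 1 not equal to any nonpositive integer. Let ρ : ℕ → ℝ be the generalized Hahn weight of type II, ρ(x) = (α₁)ₓ(α₂)ₓ(−N)ₓ / ((β₁+1)ₓ(β₂+1)ₓ x!). Then ρ satisfies the Pearson equation Δ(φρ)(x) + ψ(x)ρ(x) = 0 for all x ∈ ℕ, where φ(x) = x(x+β₁)(x+β₂) and ψ(x) = (β₁ + β₂ − α₁ − α₂ + N)x² + (β₁β₂ + α₁N − α₁α₂ + α₂N)x + α₁α₂N. -/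
/-- The generalized Hahn weight of type II,
`ρ(x) = (α₁)ₓ(α₂)ₓ(−N)ₓ/((β₁+1)ₓ(β₂+1)ₓ x!)`, satisfies the Pearson equation
`Δ(φρ) + ψρ = 0` with `φ(x) = x(x+β₁)(x+β₂)` and
`ψ(x) = (β₁+β₂−α₁−α₂+N)x² + (β₁β₂ + α₁N − α₁α₂ + α₂N)x + α₁α₂N`. -/
theorem generalized_hahnII_pearson (N : ℕ) (α₁ α₂ β₁ β₂ : ℝ)
    (hβ₁ : ∀ k : ℕ, β₁ + 1 ≠ -(k : ℝ)) (hβ₂ : ∀ k : ℕ, β₂ + 1 ≠ -(k : ℝ)) (ρ : ℕ → ℝ)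
    (hρ : ∀ x : ℕ,
      ρ x = poch α₁ x * poch α₂ x * poch (-(N : ℝ)) x
        / (poch (β₁ + 1) x * poch (β₂ + 1) x * (Nat.factorial x : ℝ))) :
    ∀ x : ℕ, ddiff (fun y : ℕ => (y : ℝ) * ((y : ℝ) + β₁) * ((y : ℝ) + β₂) * ρ y) x
      + ((β₁ + β₂ - α₁ - α₂ + N) * (x : ℝ) ^ 2
        + (β₁ * β₂ + α₁ * N - α₁ * α₂ + α₂ * N) * (x : ℝ) + α₁ * α₂ * N) * ρ x = 0 := by
  intro x
  have hne : ∀ b : ℝ, (∀ k : ℕ, b ≠ -(k : ℝ)) → ∀ n, poch b n ≠ 0 := by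
    intro b hb n
    induction n with
    | zero => simp [poch]
    | succ n ih =>
      simp only [poch]
      exact mul_ne_zero ih (fun h => hb n (by linarith))
  have h1 := hne _ hβ₁ x
  have h2 := hne _ hβ₂ x
  have h3 : β₁ + 1 + (x : ℝ) ≠ 0 := fun h => hβ₁ x (by linarith)
  have h4 : β₂ + 1 + (x : ℝ) ≠ 0 := fun h => hβ₂ x (by linarith)
  have h5 : (Nat.factorial x : ℝ) ≠ 0 := by positivity
  have h6 : (x : ℝ) + 1 ≠ 0 := by positivity
  have key : ((x : ℝ) + 1) * ((x : ℝ) + 1 + β₁) * ((x : ℝ) + 1 + β₂) * ρ (x + 1)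
      = (α₁ + x) * (α₂ + x) * (-(N : ℝ) + x) * ρ x := by
    rw [hρ, hρ, Nat.factorial_succ]
    simp only [poch]
    push_cast
    have e3 : (x : ℝ) + 1 + β₁ = β₁ + 1 + x := by ring
    have e4 : (x : ℝ) + 1 + β₂ = β₂ + 1 + x := by ring
    rw [e3, e4]
    field_simp
  simp only [ddiff]
  push_cast
  rw [key]
  ring
end

section
/- Let c > 0 and M ∈ ℝ, and define ρ̃ : ℕ → ℝ by ρ̃(x) = cˣ/x! + M·δ₀(x), where δ₀(x) = 1 if x = 0 and 0 otherwise. Then ρ̃ satisfies the Pearson equation Δ[(x−1)x·ρ̃](x) + (x − (c+1))·x·ρ̃(x) = 0 for all x ∈ ℕ, where (x−1)x·ρ̃ denotes the function y ↦ (y−1)y·ρ̃(y). -/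
/-- The Charlier weight with an added mass `M` at `0`,
`ρ̃(x) = cˣ/x! + M·δ₀(x)`, satisfies the Pearson equation
`Δ[(x−1)x·ρ̃](x) + (x − (c+1))·x·ρ̃(x) = 0` for all `x ∈ ℕ`. -/
theorem charlier_dirac_pearson (c M : ℝ) (hc : 0 < c) (ρ : ℕ → ℝ)
    (hρ : ∀ x : ℕ,
      ρ x = c ^ x / (Nat.factorial x : ℝ) + M * (if x = 0 then (1 : ℝ) else 0)) :
    ∀ x : ℕ, ddiff (fun y : ℕ => ((y : ℝ) - 1) * (y : ℝ) * ρ y) x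
      + ((x : ℝ) - (c + 1)) * (x : ℝ) * ρ x = 0 := by
  intro x
  rcases x with _ | n
  · simp [ddiff]
  · have h : ((n : ℝ) + 1 + 1) * ρ (n + 1 + 1) = c * ρ (n + 1) := by
      have h1 : ((n : ℝ) + 1 + 1) ≠ 0 := by positivity
      have h2 : ((Nat.factorial (n + 1) : ℕ) : ℝ) ≠ 0 := by positivity
      rw [hρ, hρ, Nat.factorial_succ (n + 1)]
      simp only [Nat.succ_ne_zero, if_false]
      push_cast
      field_simp
      ring
    simp only [ddiff]
    push_cast
    linear_combination ((n : ℝ) + 1) * h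
end

section
/- Let β > −1, c > 0, M ∈ ℝ, α > 0, and N ∈ ℕ. Define ρ̃ : ℕ → ℝ by ρ̃(x) = (α)ₓ(−N)ₓ/((β+1)ₓ x!) + M·δ₀(x), where δ₀(x) = 1 if x = 0 and 0 otherwise. Then ρ̃ satisfies the Pearson equation Δ[(x−1)(x+β)x·ρ̃](x) + ((β − 1 − α + N)x + αN − β)·x·ρ̃(x) = 0 for all x ∈ ℕ. -/
/-- The Hahn weight with an added mass `M` at `0`,
`ρ̃(x) = (α)ₓ(−N)ₓ/((β+1)ₓ x!) + M·δ₀(x)`, satisfies the Pearson equation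
`Δ[(x−1)(x+β)x·ρ̃](x) + ((β − 1 − α + N)x + αN − β)·x·ρ̃(x) = 0` for all `x ∈ ℕ`. -/
theorem hahn_dirac_pearson (β c M α : ℝ) (hβ : -1 < β) (hc : 0 < c) (hα : 0 < α) (N : ℕ)
    (ρ : ℕ → ℝ)
    (hρ : ∀ x : ℕ,
      ρ x = poch α x * poch (-(N : ℝ)) x / (poch (β + 1) x * (Nat.factorial x : ℝ))
        + M * (if x = 0 then (1 : ℝ) else 0)) :
    ∀ x : ℕ, ddiff (fun y : ℕ => ((y : ℝ) - 1) * ((y : ℝ) + β) * (y : ℝ) * ρ y) x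
      + ((β - 1 - α + N) * (x : ℝ) + α * N - β) * (x : ℝ) * ρ x = 0 := by
  intro x
  rcases Nat.eq_zero_or_pos x with rfl | hx
  · simp [ddiff]
  have hp : ∀ n : ℕ, 0 < poch (β + 1) n := by
    intro n
    induction n with
    | zero => simp [poch]
    | succ k ih =>
      have hk : (0 : ℝ) ≤ k := Nat.cast_nonneg k
      exact mul_pos ih (by linarith)
  have h0 : x ≠ 0 := by omega
  have hp1 : poch (β + 1) x ≠ 0 := (hp x).ne'
  have hk : (0 : ℝ) ≤ x := Nat.cast_nonneg x
  have hb : β + 1 + (x : ℝ) ≠ 0 := ne_of_gt (by linarith)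
  have hx1 : (x : ℝ) + 1 ≠ 0 := ne_of_gt (by linarith)
  have hf : (Nat.factorial x : ℝ) ≠ 0 := by positivity
  have key : ((x : ℝ) + 1 + β) * ((x : ℝ) + 1) * ρ (x + 1)
      = (α + x) * (x - N) * ρ x := by
    rw [hρ, hρ, if_neg h0, if_neg (Nat.succ_ne_zero x), Nat.factorial_succ]
    simp only [poch]
    push_cast
    field_simp
    ring
  simp only [ddiff]
  push_cast
  linear_combination (x : ℝ) * key
end

section
/- Let {bₙ}ₙ≥₀ and {γₙ}ₙ≥₀ be sequences of complex numbers with γₙ ≠ 0 for every n ∈ ℕ, and let {Pₙ(x)}ₙ≥₀ be the sequence of monic polynomials in ℂ[x] defined by the three-term recurrence P₋₁ = 0, P₀ = 1, P_{n+1}(x) = (x − bₙ)Pₙ(x) − γₙP_{n−1}(x). Then there exists a unique linear functional L : ℂ[x] → ℂ such that L(1) = γ₀ and L(P_k · Pₙ) = γ₀γ₁⋯γₙ · δ_{k,n} for all k, n ∈ ℕ. -/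
open Polynomial

/-- Favard's theorem: given the monic polynomials `Pₙ` generated by the three-term
recurrence `P₋₁ = 0`, `P₀ = 1`, `P_{n+1} = (x − bₙ)Pₙ − γₙP_{n−1}` with all `γₙ ≠ 0`,
there is a unique linear functional `L : ℂ[x] → ℂ` with `L(1) = γ₀` and
`L(PₖPₙ) = γ₀γ₁⋯γₙ δ_{k,n}`. -/
theorem favard_existence_uniqueness (b γ : ℕ → ℂ) (hγ : ∀ n : ℕ, γ n ≠ 0)
    (P : ℕ → Polynomial ℂ)
    (hP0 : P 0 = 1)
    (hP1 : P 1 = (X - C (b 0)) * P 0)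
    (hPrec : ∀ n : ℕ,
      P (n + 2) = (X - C (b (n + 1))) * P (n + 1) - C (γ (n + 1)) * P n) :
    ∃! L : Polynomial ℂ →ₗ[ℂ] ℂ,
      L 1 = γ 0 ∧
      ∀ k n : ℕ, L (P k * P n) =
        if k = n then ∏ i ∈ Finset.range (n + 1), γ i else 0 := by
  classical
  have hmonic : ∀ n, (P n).Monic ∧ (P n).natDegree = n ∧ (P (n+1)).Monic ∧ (P (n+1)).natDegree = n + 1 := by
    intro n
    induction n with
    | zero =>
      rw [zero_add, hP1, hP0, mul_one]
      exact ⟨monic_one, natDegree_one, monic_X_sub_C _, natDegree_X_sub_C _⟩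
    | succ n ih =>
      obtain ⟨h1, h2, h3, h4⟩ := ih
      have hm : ((X - C (b (n + 1))) * P (n + 1)).Monic := (monic_X_sub_C _).mul h3
      have hd : ((X - C (b (n + 1))) * P (n + 1)).natDegree = n + 2 := by
        rw [(monic_X_sub_C _).natDegree_mul h3, natDegree_X_sub_C, h4]; ring
      have hlt : (C (γ (n + 1)) * P n).natDegree < ((X - C (b (n + 1))) * P (n + 1)).natDegree := by
        rw [hd, natDegree_C_mul (hγ _), h2]; omega
      refine ⟨h3, h4, ?_, ?_⟩
      · rw [show n + 1 + 1 = n + 2 from rfl, hPrec]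
        exact hm.sub_of_left (degree_lt_degree hlt)
      · rw [show n + 1 + 1 = n + 2 from rfl, hPrec, natDegree_sub_eq_left_of_natDegree_lt hlt, hd]
  let S : Polynomial.Sequence ℂ :=
    { elems' := P
      degree_eq' := fun n => by
        rw [degree_eq_natDegree (hmonic n).1.ne_zero, (hmonic n).2.1] }
  have hS : ∀ n, S n = P n := fun n => rfl
  have hlead : ∀ i, IsUnit (S i).leadingCoeff := fun i => by
    rw [hS, (hmonic i).1.leadingCoeff]; exact isUnit_one
  let B := S.basis hlead
  have hB : ∀ n, B n = P n := fun n => by simp [B, hS]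
  have hC : ∀ (L : Polynomial ℂ →ₗ[ℂ] ℂ) (a : ℂ) (p : Polynomial ℂ), L (C a * p) = a * L p := by
    intro L a p
    rw [C_mul', map_smul, smul_eq_mul]
  let L : Polynomial ℂ →ₗ[ℂ] ℂ := B.constr ℂ (fun n => if n = 0 then γ 0 else 0)
  have hL : ∀ n, L (P n) = if n = 0 then γ 0 else 0 := fun n => by
    rw [← hB, Module.Basis.constr_basis]
  refine ⟨L, ⟨?_, ?_⟩, ?_⟩
  · have := hL 0
    rwa [hP0, if_pos rfl] at this
  · have base : ∀ n, L (P 0 * P n) =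
        if 0 = n then ∏ i ∈ Finset.range (n + 1), γ i else 0 := by
      intro n
      rw [hP0, one_mul, hL]
      rcases n with _ | n <;> simp
    have key : ∀ k, (∀ n, L (P k * P n) =
        if k = n then ∏ i ∈ Finset.range (n + 1), γ i else 0) ∧
        (∀ n, L (P (k+1) * P n) =
        if k + 1 = n then ∏ i ∈ Finset.range (n + 1), γ i else 0) := by
      intro k
      induction k with
      | zero =>
        refine ⟨base, ?_⟩
        intro n
        rcases n with _ | m
        · rw [hP0, mul_one, hL]; simp
        · have e : P (0 + 1) * P (m + 1) = P (m + 2) + C (b (m + 1) - b 0) * P (m + 1)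
              + C (γ (m + 1)) * P m := by
            rw [hPrec m, zero_add, hP1, hP0, C_sub]; ring
          rw [e, map_add, map_add, hC, hC, hL, hL, hL]
          rcases m with _ | m
          · simp [Finset.prod_range_succ, mul_comm]
          · simp
      | succ k ih =>
        obtain ⟨h1, h2⟩ := ih
        refine ⟨h2, ?_⟩
        intro n
        rcases n with _ | m
        · have e : P (k + 1 + 1) * P 0 = P (k + 1) * P 1 + C (b 0 - b (k + 1)) * (P (k + 1) * P 0)
              - C (γ (k + 1)) * (P k * P 0) := by
            rw [hPrec k, hP1, hP0, C_sub]; ring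
          rw [e, map_sub, map_add, hC, hC, h2, h2, h1]
          rcases k with _ | k
          · simp [Finset.prod_range_succ, mul_comm]
          · simp
        · have e : P (k + 1 + 1) * P (m + 1) = P (k + 1) * P (m + 2)
              + C (b (m + 1) - b (k + 1)) * (P (k + 1) * P (m + 1))
              + C (γ (m + 1)) * (P (k + 1) * P m)
              - C (γ (k + 1)) * (P k * P (m + 1)) := by
            rw [hPrec k, hPrec m, C_sub]; ring
          rw [e, map_sub, map_add, map_add, hC, hC, hC, h2, h2, h2, h1]
          by_cases c1 : k = m + 1
          · subst c1
            simp [Finset.prod_range_succ]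
            ring
          · by_cases c2 : k = m
            · subst c2
              simp
            · by_cases c3 : k + 1 = m
              · subst c3
                rw [if_neg c1]
                simp [Finset.prod_range_succ]
                ring
              · simp [c1, c2, c3]
    exact fun k => (key k).1
  · rintro M ⟨hM1, hM⟩
    apply B.ext
    intro n
    rw [hB, hL]
    have := hM 0 n
    rw [hP0, one_mul] at this
    rw [this]
    rcases n with _ | n <;> simp
end
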